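/- arXiv:1703.09001 — 10 statements merged into one kernel-verified Lean document; each statement's English description precedes it below -/
import Mathlib

section
/- Assume moreover that the norm on K is nontrivial (NontriviallyNormedField K) and that the denominator of f does not vanish at x₀, i.e. x₀² + d·x₀ + (a−d)²/3 + b ≠ 0. Then f(x₀) = x₀ and f has derivative 1 at x₀ (HasDerivAt f 1 x₀); in particular x₀ is an indifferent fixed point of f. -/
/-!
Write `N` and `D` for the numerator and denominator of `f`. Then
`N x - x * D x = -(x - x₀) ^ 3` identically, so `x₀` is a triple zero of `N - x * D`. Hence
`N x₀ = x₀ * D x₀` and `N' x₀ = D x₀ + x₀ * D' x₀`; the first gives `f x₀ = x₀`, and both together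
turn the quotient rule `(N' * D - N * D') / D ^ 2` into `1` at `x₀`.
-/

/-- For the (2,2)-rational map `f` with unique fixed point
`x₀ = (a−d)/3`, if the norm on `K` is nontrivial and the denominator of `f` does not
vanish at `x₀`, then `f x₀ = x₀` and `f` has derivative `1` at `x₀`, i.e. `x₀` is an
indifferent fixed point. -/
theorem stmt_1 {K : Type*} [NontriviallyNormedField K] [IsUltrametricDist K] [CharZero K]
    (a b d : K) (f : K → K)
    (hf : ∀ x : K, f x =
      (a * x ^ 2 + b * x + ((a - d) / 3) ^ 3) / (x ^ 2 + d * x + (a - d) ^ 2 / 3 + b))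
    (x₀ : K) (hx₀ : x₀ = (a - d) / 3)
    (hden : x₀ ^ 2 + d * x₀ + (a - d) ^ 2 / 3 + b ≠ 0) :
    f x₀ = x₀ ∧ HasDerivAt f 1 x₀ := by
  -- Eliminating `a` makes every identity below polynomial in `x₀`, `b`, `d`.
  have ha : a = d + 3 * x₀ := by rw [hx₀]; field_simp; ring
  have hc : (a - d) ^ 2 / 3 = 3 * x₀ ^ 2 := by rw [ha]; field_simp; ring
  rw [hc] at hden
  have hf' : f = fun x => (a * x ^ 2 + b * x + x₀ ^ 3) / (x ^ 2 + d * x + 3 * x₀ ^ 2 + b) := by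
    funext x
    rw [hf, hc, ← hx₀]
  have hN : HasDerivAt (fun x : K => a * x ^ 2 + b * x + x₀ ^ 3) (a * (2 * x₀) + b) x₀ := by
    simpa using (((hasDerivAt_pow 2 x₀).const_mul a).add
      ((hasDerivAt_id x₀).const_mul b)).add_const (x₀ ^ 3)
  have hD : HasDerivAt (fun x : K => x ^ 2 + d * x + 3 * x₀ ^ 2 + b) (2 * x₀ + d) x₀ := by
    simpa using (((hasDerivAt_pow 2 x₀).add
      ((hasDerivAt_id x₀).const_mul d)).add_const (3 * x₀ ^ 2)).add_const b
  subst hf'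
  refine ⟨?_, ?_⟩
  · rw [div_eq_iff hden, ha]
    ring
  · refine (hN.fun_div hD hden).congr_deriv ?_
    rw [div_eq_iff (pow_ne_zero 2 hden), ha]
    ring
end

section
/- For every x ∈ K with x ≠ x₁ and x ≠ x₂ one has the identity of norms ‖f(x) − x₀‖ · ‖x − x₁‖ · ‖x − x₂‖ = ‖x − x₀‖ · ‖((2a+d)/3)·(x − x₀) + (x₀ − x₁)·(x₀ − x₂)‖. -/
/-!
The norm is multiplicative, so the claim is the norm of an identity in `K`. Since `x₀` is a fixed
point of `f`, the numerator of `f x - x₀` over the common denominator `(x - x₁) * (x - x₂)` is a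
quadratic in `x` divisible by `x - x₀`. Expanding around `x₀` gives the cofactor
`((2a+d)/3)(x - x₀) + (x₀ - x₁)(x₀ - x₂)`.
-/


/-- For every `x ≠ x₁, x₂` one has
`‖f(x) − x₀‖·‖x − x₁‖·‖x − x₂‖ = ‖x − x₀‖·‖((2a+d)/3)(x − x₀) + (x₀ − x₁)(x₀ − x₂)‖`. -/
theorem stmt_2 {K : Type*} [NormedField K] [IsUltrametricDist K] [CharZero K]
    (a b d : K) (f : K → K)
    (hf : ∀ x : K, f x =
      (a * x ^ 2 + b * x + ((a - d) / 3) ^ 3) / (x ^ 2 + d * x + (a - d) ^ 2 / 3 + b))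
    (x₀ x₁ x₂ : K) (hx₀ : x₀ = (a - d) / 3)
    (hsum : x₁ + x₂ = -d) (hprod : x₁ * x₂ = (a - d) ^ 2 / 3 + b)
    (x : K) (hx1 : x ≠ x₁) (hx2 : x ≠ x₂) :
    ‖f x - x₀‖ * ‖x - x₁‖ * ‖x - x₂‖ =
      ‖x - x₀‖ * ‖((2 * a + d) / 3) * (x - x₀) + (x₀ - x₁) * (x₀ - x₂)‖ := by
  have hD : x ^ 2 + d * x + (a - d) ^ 2 / 3 + b = (x - x₁) * (x - x₂) := by
    linear_combination x * hsum - hprod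
  have hne : (x - x₁) * (x - x₂) ≠ 0 := mul_ne_zero (sub_ne_zero.2 hx1) (sub_ne_zero.2 hx2)
  -- The value at `x₀` of the denominator, which is the constant term of the cofactor of `x - x₀`.
  have hD₀ : (x₀ - x₁) * (x₀ - x₂) = x₀ ^ 2 + d * x₀ + (a - d) ^ 2 / 3 + b := by
    linear_combination hprod - x₀ * hsum
  have key : (f x - x₀) * ((x - x₁) * (x - x₂)) =
      (x - x₀) * (((2 * a + d) / 3) * (x - x₀) + (x₀ - x₁) * (x₀ - x₂)) := by
    rw [hf, hD, sub_mul, div_mul_cancel₀ _ hne, ← hD, hD₀, hx₀]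
    ring
  rw [mul_assoc, ← norm_mul, ← norm_mul, ← norm_mul, key]
end

section
/- The real dynamical system generated by φ_{α,δ} satisfies: (1) every r with 0 ≤ r < α is a fixed point of φ_{α,δ}, and α is a fixed point if and only if α* = α; (2) for every r > α and every n ≥ 1 one has φ_{α,δ}^[n](r) = α²/r if α < r < α²/δ, φ_{α,δ}^[n](r) = δ* if r = α²/δ, and φ_{α,δ}^[n](r) = δ if r > α²/δ. -/
/-!
Inversion `r ↦ α² / r` sends `(α, ∞)` into `(0, α)`, and `δs ≤ δ < α`, so on each of the three
pieces of `(α, ∞)` a single application of `φ` lands in `[0, α)`, where `φ` is the identity.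
Hence every further iterate equals the first one.
-/

/-- Lemma 4, parts 1 and 2: properties of the real dynamical system
generated by `φ_{α,δ}` when `0 < δ < α`. -/
theorem stmt_3 (α δ αs δs : ℝ) (hδ : 0 < δ) (hδα : δ < α)
    (hαs : α ≤ αs) (hδs0 : 0 < δs) (hδs : δs ≤ δ)
    (φ : ℝ → ℝ)
    (hφ1 : ∀ r : ℝ, 0 ≤ r → r < α → φ r = r)
    (hφ2 : φ α = αs)
    (hφ3 : ∀ r : ℝ, α < r → r < α ^ 2 / δ → φ r = α ^ 2 / r)
    (hφ4 : φ (α ^ 2 / δ) = δs)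
    (hφ5 : ∀ r : ℝ, α ^ 2 / δ < r → φ r = δ) :
    (∀ r : ℝ, 0 ≤ r → r < α → φ r = r) ∧
    (φ α = α ↔ αs = α) ∧
    (∀ r : ℝ, α < r → ∀ n : ℕ, 1 ≤ n →
      (r < α ^ 2 / δ → φ^[n] r = α ^ 2 / r) ∧
      (r = α ^ 2 / δ → φ^[n] r = δs) ∧
      (α ^ 2 / δ < r → φ^[n] r = δ)) := by
  -- A value in `[0, α)` reached after one step is kept by all later iterates.
  have key : ∀ r v : ℝ, φ r = v → 0 ≤ v → v < α → ∀ n : ℕ, 1 ≤ n → φ^[n] r = v := by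
    intro r v hrv hv0 hvα n hn
    obtain ⟨m, rfl⟩ := Nat.exists_eq_add_of_le' hn
    rw [Function.iterate_succ_apply, hrv]
    exact Function.iterate_fixed (hφ1 v hv0 hvα) m
  refine ⟨hφ1, by rw [hφ2], fun r hr n hn => ⟨fun h => ?_, fun h => ?_, fun h => ?_⟩⟩
  · have hr0 : 0 < r := by linarith
    refine key r _ (hφ3 r hr h) (by positivity) ?_ n hn
    rw [div_lt_iff₀ hr0]
    nlinarith
  · exact key r δs (h ▸ hφ4) hδs0.le (by linarith) n hn
  · exact key r δ (hφ5 r h) hδ.le hδα n hn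
end

section
/- The real dynamical system generated by ϕ_{α,δ} satisfies: (B) for every r > α²/δ the iterates ϕ_{α,δ}^[n](r) are eventually equal to δ (in particular they tend to δ as n → ∞); (C) if α' < α²/δ, then ϕ_{α,δ}^[n](α²/δ) = α' for all n ≥ 1. -/
/-!
Write `c = α² / δ`, so that `0 < c < α`. On `(c, α)` the map is `r ↦ r² / c`, hence it multiplies
every point `x ≥ r` of this interval by at least `r / c > 1`. The orbit of a point `r > c`
therefore grows at least geometrically as long as it stays below `α`, so it reaches `[α, ∞)`
(`exists_le_iterate`). From there two more steps lead to `δ`, which is a fixed point because `α < δ`.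
The point `c` itself is sent to `α'`, which is fixed when `α' < c`.
-/

/-- An orbit on which a map stretches every point of `[r, α)` by a factor at least `q > 1`
cannot stay below `α`. -/
theorem exists_le_iterate {f : ℝ → ℝ} {r q α : ℝ} (hr : 0 < r) (hq : 1 < q)
    (hf : ∀ x, r ≤ x → x < α → q * x ≤ f x) : ∃ k : ℕ, α ≤ f^[k] r := by
  by_contra! h
  have hgrow : ∀ n : ℕ, q ^ n * r ≤ f^[n] r := by
    intro n
    induction n with
    | zero => simp
    | succ n ih =>
      have hrn : r ≤ f^[n] r :=
        (le_mul_of_one_le_left hr.le (one_le_pow₀ hq.le)).trans ih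
      rw [Function.iterate_succ_apply']
      calc q ^ (n + 1) * r = q * (q ^ n * r) := by ring
        _ ≤ q * f^[n] r := by gcongr
        _ ≤ f (f^[n] r) := hf _ hrn (h n)
  obtain ⟨n, hn⟩ := pow_unbounded_of_one_lt (α / r) hq
  rw [div_lt_iff₀ hr] at hn
  linarith [hgrow n, h n]

/-- Lemma 5, parts B and C: properties of the real dynamical system
generated by `ϕ_{α,δ}` when `0 < α < δ`. -/
theorem stmt_4 (α δ α' δ' : ℝ) (hα : 0 < α) (hαδ : α < δ)
    (hα'0 : 0 < α') (hα' : α' ≤ α ^ 2 / δ) (hδ' : δ ≤ δ')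
    (ϕ : ℝ → ℝ)
    (hϕ1 : ∀ r : ℝ, 0 ≤ r → r < α ^ 2 / δ → ϕ r = r)
    (hϕ2 : ϕ (α ^ 2 / δ) = α')
    (hϕ3 : ∀ r : ℝ, α ^ 2 / δ < r → r < α → ϕ r = δ * r ^ 2 / α ^ 2)
    (hϕ4 : ϕ α = δ')
    (hϕ5 : ∀ r : ℝ, α < r → ϕ r = δ) :
    (∀ r : ℝ, α ^ 2 / δ < r →
      (∃ N : ℕ, ∀ n : ℕ, N ≤ n → ϕ^[n] r = δ) ∧
      Filter.Tendsto (fun n : ℕ => ϕ^[n] r) Filter.atTop (nhds δ)) ∧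
    (α' < α ^ 2 / δ → ∀ n : ℕ, 1 ≤ n → ϕ^[n] (α ^ 2 / δ) = α') := by
  have hδ : 0 < δ := hα.trans hαδ
  have hc : 0 < α ^ 2 / δ := by positivity
  have hfix : ϕ δ = δ := hϕ5 δ hαδ
  have htwo : ∀ x, α ≤ x → ϕ (ϕ x) = δ := by
    intro x hx
    rcases hx.eq_or_lt with rfl | hx
    · rw [hϕ4, hϕ5 _ (hαδ.trans_le hδ')]
    · rw [hϕ5 x hx, hfix]
  refine ⟨fun r hr => ?_, fun hlt n hn => ?_⟩
  · obtain ⟨k, hk⟩ : ∃ k : ℕ, α ≤ ϕ^[k] r := by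
      refine exists_le_iterate (q := r / (α ^ 2 / δ)) (hc.trans hr) ((one_lt_div hc).2 hr) ?_
      intro x hrx hxα
      have hx : 0 < x := hc.trans (hr.trans_le hrx)
      rw [hϕ3 x (hr.trans_le hrx) hxα]
      calc r / (α ^ 2 / δ) * x ≤ x / (α ^ 2 / δ) * x := by gcongr
        _ = δ * x ^ 2 / α ^ 2 := by field_simp
    have hN : ∀ n : ℕ, k + 2 ≤ n → ϕ^[n] r = δ := by
      intro n hn
      obtain ⟨m, rfl⟩ := Nat.exists_eq_add_of_le' hn
      rw [Function.iterate_add_apply, add_comm k 2, Function.iterate_add_apply ϕ 2 k]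
      change ϕ^[m] (ϕ (ϕ (ϕ^[k] r))) = δ
      rw [htwo _ hk, Function.iterate_fixed hfix]
    exact ⟨⟨k + 2, hN⟩, tendsto_atTop_of_eventually_const hN⟩
  · obtain ⟨m, rfl⟩ := Nat.exists_eq_add_of_le' hn
    rw [Function.iterate_add_apply, Function.iterate_one, hϕ2]
    exact Function.iterate_fixed (hϕ1 α' hα'0.le hlt) m
end

section
/- Assume x₀ ≠ x₁ and x₀ ≠ x₂. If x ∈ K satisfies ‖x − x₀‖ < α, ‖x − x₀‖ < β and δ·‖x − x₀‖ < α·β, then ‖f(x) − x₀‖ = ‖x − x₀‖. In particular every sphere S_ρ(x₀) with ρ < min(α, β, αβ/δ) is invariant under f, so the open ball of radius min(α, β, αβ/δ) centered at x₀ is contained in the Siegel disk of x₀. -/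
/-!
Put `t = x - x₀`, `p = x₀ - x₁`, `q = x₀ - x₂` and `c = (2a + d)/3`. The denominator of `f x` is
`(t + p)(t + q)`, and the fixed point `x₀` is indifferent with multiplier exactly `1`, so that
`f x - x₀ = t (c t + p q) / ((t + p)(t + q))`. Under the hypotheses `p`, `q` and `p q` strictly
dominate `t`, `t` and `c t`, so by the ultrametric inequality both `c t + p q` and
`(t + p)(t + q)` have norm `α β`, which is nonzero and cancels.
-/

theorem norm_add_eq_of_norm_lt {K : Type*} [NormedField K] [IsUltrametricDist K] {u v : K}
    (h : ‖u‖ < ‖v‖) : ‖u + v‖ = ‖v‖ := by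
  rw [IsUltrametricDist.norm_add_eq_max_of_norm_ne_norm h.ne, max_eq_right h.le]

/-- if `‖x − x₀‖ < α`, `‖x − x₀‖ < β` and `δ·‖x − x₀‖ < α·β`, then
`‖f(x) − x₀‖ = ‖x − x₀‖`; in particular every sphere `S_ρ(x₀)` with
`ρ < min(α, β, αβ/δ)` is invariant under `f`. -/
theorem stmt_5 {K : Type*} [NormedField K] [IsUltrametricDist K] [CharZero K]
    (a b d : K) (f : K → K)
    (hf : ∀ x : K, f x =
      (a * x ^ 2 + b * x + ((a - d) / 3) ^ 3) / (x ^ 2 + d * x + (a - d) ^ 2 / 3 + b))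
    (x₀ x₁ x₂ : K) (hx₀ : x₀ = (a - d) / 3)
    (hsum : x₁ + x₂ = -d) (hprod : x₁ * x₂ = (a - d) ^ 2 / 3 + b)
    (δ α β : ℝ) (hδ : δ = ‖(2 * a + d) / 3‖) (hα : α = ‖x₀ - x₁‖) (hβ : β = ‖x₀ - x₂‖)
    (h01 : x₀ ≠ x₁) (h02 : x₀ ≠ x₂) :
    (∀ x : K, ‖x - x₀‖ < α → ‖x - x₀‖ < β → δ * ‖x - x₀‖ < α * β →
      ‖f x - x₀‖ = ‖x - x₀‖) ∧
    (∀ ρ : ℝ, 0 < ρ → ρ < α → ρ < β → δ * ρ < α * β →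
      ∀ x : K, x ∈ {y : K | ‖y - x₀‖ = ρ} → f x ∈ {y : K | ‖y - x₀‖ = ρ}) := by
  have key : ∀ x : K, ‖x - x₀‖ < α → ‖x - x₀‖ < β → δ * ‖x - x₀‖ < α * β →
      ‖f x - x₀‖ = ‖x - x₀‖ := by
    intro x h1 h2 h3
    subst hα hβ hδ
    have hp : ‖x - x₁‖ = ‖x₀ - x₁‖ := by
      simpa using norm_add_eq_of_norm_lt h1
    have hq : ‖x - x₂‖ = ‖x₀ - x₂‖ := by
      simpa using norm_add_eq_of_norm_lt h2
    have hn : ‖(2 * a + d) / 3 * (x - x₀) + (x₀ - x₁) * (x₀ - x₂)‖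
        = ‖x₀ - x₁‖ * ‖x₀ - x₂‖ := by
      rw [← norm_mul]
      exact norm_add_eq_of_norm_lt (by rwa [norm_mul, norm_mul])
    have hα0 : ‖x₀ - x₁‖ ≠ 0 := norm_ne_zero_iff.2 (sub_ne_zero.2 h01)
    have hβ0 : ‖x₀ - x₂‖ ≠ 0 := norm_ne_zero_iff.2 (sub_ne_zero.2 h02)
    have hx1 : x - x₁ ≠ 0 := norm_ne_zero_iff.1 (hp ▸ hα0)
    have hx2 : x - x₂ ≠ 0 := norm_ne_zero_iff.1 (hq ▸ hβ0)
    have hden : x ^ 2 + d * x + (a - d) ^ 2 / 3 + b = (x - x₁) * (x - x₂) := by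
      linear_combination x * hsum - hprod
    have ha : a = 3 * x₀ + d := by rw [hx₀]; ring
    have hform : f x - x₀ = (x - x₀) *
        ((2 * a + d) / 3 * (x - x₀) + (x₀ - x₁) * (x₀ - x₂)) / ((x - x₁) * (x - x₂)) := by
      rw [hf, eq_div_iff (mul_ne_zero hx1 hx2), sub_mul, hden,
        div_mul_cancel₀ _ (mul_ne_zero hx1 hx2), ← hden]
      -- The remaining identity in `x` needs only the product `(x₀ - x₁) (x₀ - x₂)`.
      have hpq : (x₀ - x₁) * (x₀ - x₂) = x₀ ^ 2 + d * x₀ + (a - d) ^ 2 / 3 + b := by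
        linear_combination hprod - x₀ * hsum
      rw [hpq, ha]
      ring
    rw [hform, norm_div, norm_mul, norm_mul, hn, hp, hq,
      mul_div_cancel_right₀ _ (mul_ne_zero hα0 hβ0)]
  refine ⟨key, fun ρ _ hρα hρβ hδρ x hx => ?_⟩
  simp only [Set.mem_setOf_eq] at hx ⊢
  rw [← hx] at hρα hρβ hδρ ⊢
  exact key x hρα hρβ hδρ
end

section
/- Assume α = β and 0 ≤ δ < α. Let x ∈ K and k ∈ ℕ be such that f^[j](x) ∉ {x₁, x₂} for all j < k and f^[k](x) ∈ {x₁, x₂}. Then ‖x − x₀‖ = α. (That is, the set P of points whose forward orbit genuinely reaches a pole of f is contained in the sphere S_α(x₀).) -/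
/-!
In the coordinate `u = x - x₀` the map becomes `u ↦ u * (s * u + p) / (u ^ 2 + s * u + p)`,
where `s = (2 * a + d) / 3` has norm `δ` and `p = (x₀ - x₁) * (x₀ - x₂)` has norm `α ^ 2`.
Since `δ < α`, in both numerator and denominator the ultrametric inequality shows that a
point with `‖u‖ < α` keeps its distance to `x₀`, while a point with `‖u‖ > α` is sent
strictly inside the sphere. So the complement of the sphere is forward invariant
(`norm_conj_ne`), and as both poles lie on the sphere, an orbit reaching a pole starts on it.
-/

/-- The complement of the sphere of radius `α` around `0` is invariant under the conjugated map
`u ↦ u * (s * u + p) / (u ^ 2 + s * u + p)`, whose denominator does not vanish there. -/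
lemma norm_conj_ne {K : Type*} [NormedField K] [IsUltrametricDist K] {s p u : K} {α : ℝ}
    (hs : ‖s‖ < α) (hp : ‖p‖ = α ^ 2) (hu : ‖u‖ ≠ α) :
    u ^ 2 + s * u + p ≠ 0 ∧ ‖u * (s * u + p) / (u ^ 2 + s * u + p)‖ ≠ α := by
  have hα : 0 < α := (norm_nonneg s).trans_lt hs
  have hu0 := norm_nonneg u
  have hs0 := norm_nonneg s
  rcases lt_or_gt_of_ne hu with h | h
  · -- inside the sphere, `p` dominates both the numerator factor and the denominator
    have h1 : ‖s * u‖ < ‖p‖ := by rw [norm_mul, hp]; nlinarith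
    have h2 : ‖s * u + p‖ = α ^ 2 := by
      rw [IsUltrametricDist.norm_add_eq_max_of_norm_ne_norm h1.ne, max_eq_right h1.le, hp]
    have h3 : ‖u ^ 2‖ < ‖s * u + p‖ := by rw [norm_pow, h2]; nlinarith
    have h4 : ‖u ^ 2 + s * u + p‖ = α ^ 2 := by
      rw [add_assoc, IsUltrametricDist.norm_add_eq_max_of_norm_ne_norm h3.ne,
        max_eq_right h3.le, h2]
    refine ⟨norm_pos_iff.mp (h4 ▸ by positivity), ?_⟩
    rw [norm_div, norm_mul, h2, h4, mul_div_cancel_right₀ _ (by positivity)]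
    exact hu
  · -- outside the sphere, `u ^ 2` dominates the denominator
    have h2 : ‖s * u + p‖ < α * ‖u‖ := by
      refine (IsUltrametricDist.norm_add_le_max _ _).trans_lt (max_lt ?_ ?_)
      · rw [norm_mul]; nlinarith
      · rw [hp]; nlinarith
    have h3 : ‖s * u + p‖ < ‖u ^ 2‖ := by rw [norm_pow]; nlinarith
    have h4 : ‖u ^ 2 + s * u + p‖ = ‖u‖ ^ 2 := by
      rw [add_assoc, IsUltrametricDist.norm_add_eq_max_of_norm_ne_norm h3.ne',
        max_eq_left h3.le, norm_pow]
    have hpos : 0 < ‖u‖ := hα.trans h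
    refine ⟨norm_pos_iff.mp (h4 ▸ by positivity), ne_of_lt ?_⟩
    rw [norm_div, norm_mul, h4, div_lt_iff₀ (by positivity)]
    nlinarith


/-- assume `α = β` and `0 ≤ δ < α`. If the forward orbit of `x` genuinely
reaches a pole of `f` (at time `k`, having avoided the poles before), then
`‖x − x₀‖ = α`; i.e. the set `P` is contained in the sphere `S_α(x₀)`. -/
theorem stmt_7 {K : Type*} [NormedField K] [IsUltrametricDist K] [CharZero K]
    (a b d : K) (f : K → K)
    (hf : ∀ x : K, f x =
      (a * x ^ 2 + b * x + ((a - d) / 3) ^ 3) / (x ^ 2 + d * x + (a - d) ^ 2 / 3 + b))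
    (x₀ x₁ x₂ : K) (hx₀ : x₀ = (a - d) / 3)
    (hsum : x₁ + x₂ = -d) (hprod : x₁ * x₂ = (a - d) ^ 2 / 3 + b)
    (δ α β : ℝ) (hδ : δ = ‖(2 * a + d) / 3‖) (hα : α = ‖x₀ - x₁‖) (hβ : β = ‖x₀ - x₂‖)
    (hαβ : α = β) (hδα : δ < α)
    (x : K) (k : ℕ)
    (havoid : ∀ j : ℕ, j < k → f^[j] x ∉ ({x₁, x₂} : Set K))
    (hhit : f^[k] x ∈ ({x₁, x₂} : Set K)) :
    ‖x - x₀‖ = α := by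
  have hs : ‖(2 * a + d) / 3‖ < α := hδ ▸ hδα
  have hp : ‖(x₀ - x₁) * (x₀ - x₂)‖ = α ^ 2 := by
    rw [norm_mul, ← hα, ← hβ, ← hαβ, sq]
  have step : ∀ y : K, ‖y - x₀‖ ≠ α → ‖f y - x₀‖ ≠ α := by
    intro y hy
    obtain ⟨hD, hne⟩ := norm_conj_ne hs hp hy
    -- the denominator of `f` at `y`, expanded around `x₀`
    have hden : y ^ 2 + d * y + (a - d) ^ 2 / 3 + b =
        (y - x₀) ^ 2 + (2 * a + d) / 3 * (y - x₀) + (x₀ - x₁) * (x₀ - x₂) := by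
      have e : (x₀ - x₁) * (x₀ - x₂) = x₀ ^ 2 - x₀ * (x₁ + x₂) + x₁ * x₂ := by ring
      rw [e, hsum, hprod, hx₀]
      field_simp
      ring
    have hb : b = (x₀ - x₁) * (x₀ - x₂) - x₀ ^ 2 - d * x₀ - (a - d) ^ 2 / 3 := by
      linear_combination (-1 : K) * hprod + x₀ * hsum
    have key : f y - x₀ = (y - x₀) * ((2 * a + d) / 3 * (y - x₀) + (x₀ - x₁) * (x₀ - x₂)) /
        ((y - x₀) ^ 2 + (2 * a + d) / 3 * (y - x₀) + (x₀ - x₁) * (x₀ - x₂)) := by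
      rw [hf, hden, eq_div_iff hD, sub_mul, div_mul_cancel₀ _ hD, hb, hx₀]
      field_simp
      ring
    rwa [key]
  by_contra hx
  have hall : ∀ n : ℕ, ‖f^[n] x - x₀‖ ≠ α := by
    intro n
    induction n with
    | zero => exact hx
    | succ n ih => rw [Function.iterate_succ_apply']; exact step _ ih
  refine hall k ?_
  rcases hhit with h | h
  · rw [h, norm_sub_rev, hα]
  · rw [h, norm_sub_rev, hαβ, hβ]
end

section
/- Let r ∈ A, i.e. 0 ≤ r < β and r ≠ α. Then f is an isometry on the sphere S_r(0): for all c, x ∈ ℚ_p with ‖c‖_p = ‖x‖_p = r one has ‖f(x) − f(c)‖_p = ‖x − c‖_p. Moreover, for every ρ with 0 < ρ < r and every c with ‖c‖_p = r, the image of the closed ball is f '' {x : ‖x − c‖_p ≤ ρ} = {y : ‖y − f(c)‖_p ≤ ρ}. -/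
/-!
Write `D x = x² + a x + b = (x - x̂₁)(x - x̂₂)` and `m = max α r`. Since `r ≠ α` and `r < β`, the
strong triangle inequality gives `‖D x‖ = m β = ‖a x + b‖` on the sphere `‖x‖ = r`
(`norm_on_sphere`). Elimination yields
`f x - f c = (x - c) * ((a x + b) (a c + b) - b x c) / (D x * D c)`,
and `‖b x c‖ = α β r² < (m β)²`, so the fraction multiplying `x - c` has norm `1`: `f` is an
isometry on the sphere. A closed ball of radius `ρ < r` around a point `c` of the sphere lies in the
sphere and is compact, and `x ↦ f x - f c + c` is an isometry of it into itself. An isometry of a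
compact metric space into itself is onto (`surjective_of_isometry_compact`), which gives the
statement about balls.
-/

/-- If `y` were at distance at least `ε` from the range, the orbit of `y` would be an `ε`-separated
sequence, which has no convergent subsequence. -/
theorem surjective_of_isometry_compact {X : Type*} [MetricSpace X] [CompactSpace X]
    (g : X → X) (hg : Isometry g) : Function.Surjective g := by
  intro y
  by_contra hy
  have hcl : IsClosed (Set.range g) := (isCompact_range hg.continuous).isClosed
  obtain ⟨ε, hε, hball⟩ := Metric.isOpen_iff.1 hcl.isOpen_compl y hy
  have hfar : ∀ z, ε ≤ dist (g z) y := by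
    intro z
    by_contra! h
    exact hball (Metric.mem_ball.2 h) ⟨z, rfl⟩
  have hiter : ∀ n : ℕ, Isometry g^[n] := by
    intro n
    induction n with
    | zero => exact isometry_id
    | succ n ih => exact ih.comp hg
  have hsep : ∀ m k : ℕ, ε ≤ dist (g^[m + (k + 1)] y) (g^[m] y) := by
    intro m k
    rw [Function.iterate_add_apply, (hiter m).dist_eq, Function.iterate_succ_apply']
    exact hfar _
  obtain ⟨z, φ, hφ, hz⟩ := CompactSpace.tendsto_subseq (fun n : ℕ => g^[n] y)
  obtain ⟨N, hN⟩ := Metric.cauchySeq_iff.1 hz.cauchySeq ε hε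
  have h1 := hN (N + 1) (by omega) N le_rfl
  have hlt : φ N < φ (N + 1) := hφ (Nat.lt_succ_self N)
  obtain ⟨k, hk⟩ := Nat.exists_eq_add_of_lt hlt
  have h2 := hsep (φ N) k
  simp only [Function.comp_apply, hk] at h1
  rw [add_assoc] at h1
  exact absurd h1 (not_lt.2 h2)

theorem padic_norm_add_left {p : ℕ} [Fact p.Prime] {u v : ℚ_[p]} (h : ‖v‖ < ‖u‖) :
    ‖u + v‖ = ‖u‖ := by
  rw [Padic.add_eq_max_of_ne h.ne', max_eq_left h.le]

theorem padic_norm_sub_of_ne {p : ℕ} [Fact p.Prime] {u v : ℚ_[p]} (h : ‖u‖ ≠ ‖v‖) :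
    ‖u - v‖ = max ‖u‖ ‖v‖ := by
  rw [sub_eq_add_neg, Padic.add_eq_max_of_ne (by rwa [norm_neg]), norm_neg]

/-- With `u, v` in the roles of `x̂₁, x̂₂`, the two quantities are the denominator of `f` and
`a x + b`. -/
theorem norm_on_sphere {p : ℕ} [Fact p.Prime] {u v x : ℚ_[p]} (huv : ‖u‖ ≤ ‖v‖)
    (hxv : ‖x‖ < ‖v‖) (hxu : ‖x‖ ≠ ‖u‖) :
    ‖(x - u) * (x - v)‖ = max ‖u‖ ‖x‖ * ‖v‖ ∧
      ‖-(u + v) * x + u * v‖ = max ‖u‖ ‖x‖ * ‖v‖ := by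
  have hv : 0 < ‖v‖ := (norm_nonneg x).trans_lt hxv
  constructor
  · rw [norm_mul, padic_norm_sub_of_ne hxu, padic_norm_sub_of_ne hxv.ne, max_eq_right hxv.le,
      max_comm]
  · rcases lt_or_gt_of_ne hxu with h | h
    · have hs : ‖u + v‖ ≤ ‖v‖ := (Padic.nonarchimedean u v).trans (max_le huv le_rfl)
      have : ‖-(u + v) * x‖ < ‖u * v‖ := by
        rw [norm_mul, norm_mul, norm_neg]
        calc ‖u + v‖ * ‖x‖ ≤ ‖v‖ * ‖x‖ := by gcongr
          _ < ‖v‖ * ‖u‖ := by gcongr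
          _ = _ := mul_comm _ _
      rw [add_comm, padic_norm_add_left this, norm_mul, max_eq_left h.le]
    · -- here `‖u‖ < ‖x‖ < ‖v‖`, so `‖u + v‖ = ‖v‖` exactly
      have hs : ‖u + v‖ = ‖v‖ := by
        rw [add_comm]; exact padic_norm_add_left (h.trans hxv)
      have : ‖u * v‖ < ‖-(u + v) * x‖ := by
        rw [norm_mul, norm_mul, norm_neg, hs, mul_comm]
        gcongr
      rw [padic_norm_add_left this, norm_mul, norm_neg, hs, max_eq_right h.le, mul_comm]

/-- Lemma 13: for `r ∈ A = [0, β) \ {α}`, `f` is an isometry on the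
sphere `S_r(0)`, and it maps each closed ball `V_ρ(c) ⊆ S_r(0)` (with `0 < ρ < r`)
onto the closed ball `V_ρ(f(c))`. -/
theorem stmt_16 (p : ℕ) [Fact p.Prime] (a b : ℚ_[p]) (hb : b ≠ 0)
    (f : ℚ_[p] → ℚ_[p])
    (hf : ∀ x : ℚ_[p], f x = (a * x ^ 2 + b * x) / (x ^ 2 + a * x + b))
    (xh₁ xh₂ : ℚ_[p]) (hsum : xh₁ + xh₂ = -a) (hprod : xh₁ * xh₂ = b)
    (α β : ℝ) (hα : α = ‖xh₁‖) (hβ : β = ‖xh₂‖) (hαβ : α ≤ β)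
    (r : ℝ) (hr0 : 0 ≤ r) (hrβ : r < β) (hrα : r ≠ α) :
    (∀ c x : ℚ_[p], ‖c‖ = r → ‖x‖ = r → ‖f x - f c‖ = ‖x - c‖) ∧
    (∀ ρ : ℝ, 0 < ρ → ρ < r → ∀ c : ℚ_[p], ‖c‖ = r →
      f '' {x : ℚ_[p] | ‖x - c‖ ≤ ρ} = {y : ℚ_[p] | ‖y - f c‖ ≤ ρ}) := by
  subst hα hβ
  obtain rfl : a = -(xh₁ + xh₂) := by rw [hsum, neg_neg]
  subst hprod
  have hu : 0 < ‖xh₁‖ := norm_pos_iff.2 (left_ne_zero_of_mul hb)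
  have hv : 0 < ‖xh₂‖ := norm_pos_iff.2 (right_ne_zero_of_mul hb)
  have hiso : ∀ c x : ℚ_[p], ‖c‖ = r → ‖x‖ = r → ‖f x - f c‖ = ‖x - c‖ := by
    intro c x hc hx
    obtain ⟨hDx, hNx⟩ := norm_on_sphere (x := x) hαβ (by rwa [hx]) (by rwa [hx])
    obtain ⟨hDc, hNc⟩ := norm_on_sphere (x := c) hαβ (by rwa [hc]) (by rwa [hc])
    rw [hx] at hDx hNx
    rw [hc] at hDc hNc
    set m := max ‖xh₁‖ r with hm
    have hm0 : 0 < m := lt_max_of_lt_left hu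
    have hmβ : 0 < m * ‖xh₂‖ := mul_pos hm0 hv
    have hDx0 : (x - xh₁) * (x - xh₂) ≠ 0 := norm_pos_iff.1 (hDx ▸ hmβ)
    have hDc0 : (c - xh₁) * (c - xh₂) ≠ 0 := norm_pos_iff.1 (hDc ▸ hmβ)
    have hfac : ∀ z : ℚ_[p], z ^ 2 + -(xh₁ + xh₂) * z + xh₁ * xh₂ = (z - xh₁) * (z - xh₂) := by
      intro z; ring
    have key : f x - f c = (x - c) *
        ((-(xh₁ + xh₂) * x + xh₁ * xh₂) * (-(xh₁ + xh₂) * c + xh₁ * xh₂)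
          + -(xh₁ * xh₂ * (x * c))) /
        (((x - xh₁) * (x - xh₂)) * ((c - xh₁) * (c - xh₂))) := by
      rw [hf, hf, hfac, hfac, div_sub_div _ _ hDx0 hDc0]
      congr 1
      ring
    have hsmall : ‖-(xh₁ * xh₂ * (x * c))‖ <
        ‖(-(xh₁ + xh₂) * x + xh₁ * xh₂) * (-(xh₁ + xh₂) * c + xh₁ * xh₂)‖ := by
      rw [norm_neg, norm_mul, norm_mul, norm_mul, norm_mul, hNx, hNc, hx, hc]
      calc ‖xh₁‖ * ‖xh₂‖ * (r * r) = (‖xh₁‖ * r) * (‖xh₂‖ * r) := by ring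
        _ ≤ (m * m) * (‖xh₂‖ * r) := by
            gcongr
            · exact le_max_left _ _
            · exact le_max_right _ _
        _ < (m * m) * (‖xh₂‖ * ‖xh₂‖) := by gcongr
        _ = _ := by ring
    rw [key, norm_div, norm_mul, padic_norm_add_left hsmall, norm_mul (_ + _), norm_mul (_ * _),
      hNx, hNc, hDx, hDc]
    field_simp
  refine ⟨hiso, fun ρ hρ hρr c hc => ?_⟩
  have hsph : ∀ x : ℚ_[p], ‖x - c‖ ≤ ρ → ‖x‖ = r := by
    intro x hx
    have h := padic_norm_add_left (u := c) (v := x - c) (by rw [hc]; exact hx.trans_lt hρr)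
    rwa [add_sub_cancel, hc] at h
  ext y
  simp only [Set.mem_image, Set.mem_ofPred_eq]
  constructor
  · rintro ⟨x, hx, rfl⟩
    rwa [hiso c x hc (hsph x hx)]
  · intro hy
    have hmem : ∀ x : Metric.closedBall c ρ, ‖(x : ℚ_[p]) - c‖ ≤ ρ := fun x =>
      mem_closedBall_iff_norm.1 x.2
    have : CompactSpace (Metric.closedBall c ρ) :=
      isCompact_iff_compactSpace.1 (isCompact_closedBall c ρ)
    -- translate `f` so that it maps the ball around `c` into itself
    let g : Metric.closedBall c ρ → Metric.closedBall c ρ := fun x =>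
      ⟨f x - f c + c, mem_closedBall_iff_norm.2 (by
        rw [add_sub_cancel_right, hiso c x hc (hsph x (hmem x))]; exact hmem x)⟩
    have hg : Isometry g := Isometry.of_dist_eq fun x z => by
      rw [Subtype.dist_eq, Subtype.dist_eq, dist_eq_norm, dist_eq_norm,
        ← hiso z x (hsph z (hmem z)) (hsph x (hmem x))]
      congr 1
      simp only [g]
      ring
    obtain ⟨x, hx⟩ := surjective_of_isometry_compact g hg
      ⟨y - f c + c, mem_closedBall_iff_norm.2 (by rwa [add_sub_cancel_right])⟩
    refine ⟨x, hmem x, ?_⟩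
    have h := congrArg Subtype.val hx
    simpa [g] using h
end

section
/- Let r ∈ A, i.e. 0 ≤ r < β and r ≠ α, and let c ∈ ℚ_p with ‖c‖_p = r. Then ‖f(c) − c‖_p = r³/(αβ) if r < α, and ‖f(c) − c‖_p = r²/β if α < r < β. -/
/-!
Since `x² + a x + b = (x - x̂₁)(x - x̂₂)`, one has `f(c) - c = -c³ / ((c - x̂₁)(c - x̂₂))` wherever
the denominator does not vanish. The hypotheses `r ≠ α` and `r < β` separate `‖c‖` from the norms
of both roots, so `c` is not a root, and the strong triangle inequality gives
`‖c - x̂₁‖ = max r α` and `‖c - x̂₂‖ = β`.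
-/

theorem stmt_17 (p : ℕ) [Fact p.Prime] (a b : ℚ_[p]) (hb : b ≠ 0)
    (f : ℚ_[p] → ℚ_[p])
    (hf : ∀ x : ℚ_[p], f x = (a * x ^ 2 + b * x) / (x ^ 2 + a * x + b))
    (xh₁ xh₂ : ℚ_[p]) (hsum : xh₁ + xh₂ = -a) (hprod : xh₁ * xh₂ = b)
    (α β : ℝ) (hα : α = ‖xh₁‖) (hβ : β = ‖xh₂‖) (hαβ : α ≤ β)
    (r : ℝ) (hr0 : 0 ≤ r) (hrβ : r < β) (hrα : r ≠ α)
    (c : ℚ_[p]) (hc : ‖c‖ = r) :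
    (r < α → ‖f c - c‖ = r ^ 3 / (α * β)) ∧
    (α < r → ‖f c - c‖ = r ^ 2 / β) := by
  have hmax : ∀ y : ℚ_[p], r ≠ ‖y‖ → ‖c - y‖ = max r ‖y‖ := by
    intro y hy
    have h := Padic.add_eq_max_of_ne (p := p) (q := c) (r := -y) (by rwa [norm_neg, hc])
    rwa [norm_neg, hc, ← sub_eq_add_neg] at h
  have h1 : ‖c - xh₁‖ = max r α := by
    rw [hα]
    exact hmax xh₁ (hα ▸ hrα)
  have h2 : ‖c - xh₂‖ = β := by
    rw [hmax xh₂ (hβ ▸ hrβ.ne), ← hβ, max_eq_right hrβ.le]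
  have hc1 : c - xh₁ ≠ 0 := fun h => hrα (by rw [← hc, sub_eq_zero.mp h, hα])
  have hc2 : c - xh₂ ≠ 0 := fun h => hrβ.ne (by rw [← hc, sub_eq_zero.mp h, hβ])
  have hden : c ^ 2 + a * c + b = (c - xh₁) * (c - xh₂) := by
    linear_combination c * hsum - hprod
  have hdiff : f c - c = -c ^ 3 / ((c - xh₁) * (c - xh₂)) := by
    rw [hf, hden, div_sub' (mul_ne_zero hc1 hc2), ← hden]
    congr 1
    ring
  have hnorm : ‖f c - c‖ = r ^ 3 / (max r α * β) := by
    rw [hdiff, norm_div, norm_neg, norm_pow, norm_mul, h1, h2, hc]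
  refine ⟨fun h => ?_, fun h => ?_⟩
  · rw [hnorm, max_eq_right h.le]
  · have hr : r ≠ 0 := ((hα ▸ norm_nonneg xh₁).trans_lt h).ne'
    rw [hnorm, max_eq_left h.le, pow_succ' r 2, mul_div_mul_left _ _ hr]
end

section
/- Let r ∈ A with r > 0, i.e. 0 < r < β and r ≠ α, let c ∈ ℚ_p with ‖c‖_p = r, and set ρ = ‖f(c) − c‖_p. Then: (1) ‖f^[n+1](c) − f^[n](c)‖_p = ρ for every n ∈ ℕ; (2) the closed ball V_ρ(c) = {x : ‖x − c‖_p ≤ ρ} satisfies f '' V_ρ(c) = V_ρ(c); (3) if θ > 0 is such that the closed ball V_θ(c) is contained in S_r(0) and f '' V_θ(c) ⊆ V_θ(c), then θ ≥ ρ. -/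
/-!
Write `D x = x ^ 2 + a * x + b = (x - x̂₁) * (x - x̂₂)` and `M = max r α`. On the sphere `‖x‖ = r`
the strong triangle inequality gives the constant value `‖D x‖ = M * β`, because `r ≠ α` and
`r ≠ β` (`norm_denom`). Off the poles `f x = x - g x` with `g x = x ^ 3 / D x`, so
`‖f x - x‖ = r ^ 3 / (M * β) < r` on the whole sphere. Hence `f` preserves the sphere and moves each
of its points by the same distance `ρ`, which gives the claim on iterates. The lower bound for the
radius of an invariant ball `V_θ(c)` is just `f c ∈ V_θ(c)`.

For the invariance of `V_ρ(c)`, the key is that `g` contracts the sphere with ratio `r / β < 1`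
(`norm_g_sub_le`). The inclusion `⊆` needs only the strong triangle inequality; for `⊇`, a preimage
of `y` is a fixed point of the contraction `x ↦ y + g x` of `V_ρ(c)`.
-/

/-- The denominator has constant norm on a sphere of radius `r < ‖u₂‖`, `r ≠ ‖u₁‖`, where `u₁`, `u₂`
are its roots. -/
lemma norm_denom {p : ℕ} [Fact p.Prime] {a b u₁ u₂ x : ℚ_[p]}
    (hsum : u₁ + u₂ = -a) (hprod : u₁ * u₂ = b) (h₁ : ‖x‖ ≠ ‖u₁‖) (h₂ : ‖x‖ < ‖u₂‖) :
    ‖x ^ 2 + a * x + b‖ = max ‖x‖ ‖u₁‖ * ‖u₂‖ := by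
  have e : x ^ 2 + a * x + b = (x + -u₁) * (x + -u₂) := by
    linear_combination hsum * x - hprod
  rw [e, norm_mul, Padic.add_eq_max_of_ne (by rwa [norm_neg]),
    Padic.add_eq_max_of_ne (by rw [norm_neg]; exact h₂.ne), norm_neg, norm_neg,
    max_eq_right h₂.le]

/-- The displacement `g x = x ^ 3 / (x ^ 2 + a * x + b)` is Lipschitz with ratio `r / ‖u₂‖` on the
sphere of radius `r`. -/
lemma norm_g_sub_le {p : ℕ} [Fact p.Prime] {a b u₁ u₂ x y : ℚ_[p]} {r : ℝ}
    (hsum : u₁ + u₂ = -a) (hprod : u₁ * u₂ = b) (h₁₂ : ‖u₁‖ ≤ ‖u₂‖)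
    (hr : 0 < r) (h₁ : r ≠ ‖u₁‖) (h₂ : r < ‖u₂‖) (hx : ‖x‖ = r) (hy : ‖y‖ = r) :
    ‖x ^ 3 / (x ^ 2 + a * x + b) - y ^ 3 / (y ^ 2 + a * y + b)‖ ≤ r / ‖u₂‖ * ‖x - y‖ := by
  have hDx := norm_denom (x := x) hsum hprod (hx ▸ h₁) (hx ▸ h₂)
  have hDy := norm_denom (x := y) hsum hprod (hy ▸ h₁) (hy ▸ h₂)
  rw [hx] at hDx
  rw [hy] at hDy
  have hrM : r ≤ max r ‖u₁‖ := le_max_left _ _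
  have huM : ‖u₁‖ ≤ max r ‖u₁‖ := le_max_right _ _
  have hu₁ := norm_nonneg u₁
  generalize max r ‖u₁‖ = M at *
  have hM : 0 < M := hr.trans_le hrM
  have hβ : 0 < ‖u₂‖ := hr.trans h₂
  have hDx0 : x ^ 2 + a * x + b ≠ 0 := norm_ne_zero_iff.1 (by rw [hDx]; positivity)
  have hDy0 : y ^ 2 + a * y + b ≠ 0 := norm_ne_zero_iff.1 (by rw [hDy]; positivity)
  have ha : ‖a‖ ≤ ‖u₂‖ := by
    rw [← norm_neg, ← hsum]
    exact (Padic.nonarchimedean _ _).trans (max_le h₁₂ le_rfl)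
  have hb : ‖b‖ = ‖u₁‖ * ‖u₂‖ := by rw [← hprod, norm_mul]
  have e : x ^ 3 / (x ^ 2 + a * x + b) - y ^ 3 / (y ^ 2 + a * y + b) =
      (x - y) * (x ^ 2 * y ^ 2 + a * (x * y * (x + y)) + b * (x ^ 2 + x * y + y ^ 2)) /
        ((x ^ 2 + a * x + b) * (y ^ 2 + a * y + b)) := by
    rw [div_sub_div _ _ hDx0 hDy0]
    congr 1
    ring
  have hxy : ‖x + y‖ ≤ r := (Padic.nonarchimedean _ _).trans (by simp [hx, hy])
  have hq : ‖x ^ 2 + x * y + y ^ 2‖ ≤ r ^ 2 := by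
    refine (Padic.nonarchimedean _ _).trans (max_le ?_ (by simp [hy]))
    refine (Padic.nonarchimedean _ _).trans (max_le (by simp [hx]) ?_)
    rw [norm_mul, hx, hy, sq]
  have hr2 : r ^ 2 ≤ M ^ 2 := by gcongr
  have hN : ‖x ^ 2 * y ^ 2 + a * (x * y * (x + y)) + b * (x ^ 2 + x * y + y ^ 2)‖
      ≤ r * M ^ 2 * ‖u₂‖ := by
    refine (Padic.nonarchimedean _ _).trans (max_le ?_ ?_)
    · refine (Padic.nonarchimedean _ _).trans (max_le ?_ ?_)
      · rw [norm_mul, norm_pow, norm_pow, hx, hy]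
        calc r ^ 2 * r ^ 2 = r * r ^ 2 * r := by ring
          _ ≤ r * M ^ 2 * ‖u₂‖ := by gcongr
      · rw [norm_mul, norm_mul, norm_mul, hx, hy]
        calc ‖a‖ * (r * r * ‖x + y‖) ≤ ‖u₂‖ * (r * r * r) := by gcongr
          _ = r * r ^ 2 * ‖u₂‖ := by ring
          _ ≤ r * M ^ 2 * ‖u₂‖ := by gcongr
    · rw [norm_mul, hb]
      calc ‖u₁‖ * ‖u₂‖ * ‖x ^ 2 + x * y + y ^ 2‖ ≤ ‖u₁‖ * ‖u₂‖ * r ^ 2 := by gcongr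
        _ = r * (r * ‖u₁‖) * ‖u₂‖ := by ring
        _ ≤ r * (M * M) * ‖u₂‖ := by gcongr
        _ = r * M ^ 2 * ‖u₂‖ := by ring
  rw [e, norm_div, norm_mul, norm_mul, hDx, hDy]
  calc _ ≤ ‖x - y‖ * (r * M ^ 2 * ‖u₂‖) / (M * ‖u₂‖ * (M * ‖u₂‖)) := by gcongr
    _ = r / ‖u₂‖ * ‖x - y‖ := by field_simp

/-- Theorem 11: for `r ∈ A`, `r > 0`, `c ∈ S_r(0)` and
`ρ = ‖f(c) − c‖`: (1) `‖f^[n+1](c) − f^[n](c)‖ = ρ` for all `n`; (2) the closed ball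
`V_ρ(c)` satisfies `f '' V_ρ(c) = V_ρ(c)`; (3) any closed ball `V_θ(c) ⊆ S_r(0)`
invariant under `f` has radius `θ ≥ ρ`. -/
theorem stmt_18 (p : ℕ) [Fact p.Prime] (a b : ℚ_[p]) (hb : b ≠ 0)
    (f : ℚ_[p] → ℚ_[p])
    (hf : ∀ x : ℚ_[p], f x = (a * x ^ 2 + b * x) / (x ^ 2 + a * x + b))
    (xh₁ xh₂ : ℚ_[p]) (hsum : xh₁ + xh₂ = -a) (hprod : xh₁ * xh₂ = b)
    (α β : ℝ) (hα : α = ‖xh₁‖) (hβ : β = ‖xh₂‖) (hαβ : α ≤ β)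
    (r : ℝ) (hr0 : 0 < r) (hrβ : r < β) (hrα : r ≠ α)
    (c : ℚ_[p]) (hc : ‖c‖ = r)
    (ρ : ℝ) (hρ : ρ = ‖f c - c‖) :
    (∀ n : ℕ, ‖f^[n + 1] c - f^[n] c‖ = ρ) ∧
    (f '' {x : ℚ_[p] | ‖x - c‖ ≤ ρ} = {x : ℚ_[p] | ‖x - c‖ ≤ ρ}) ∧
    (∀ θ : ℝ, 0 < θ → {x : ℚ_[p] | ‖x - c‖ ≤ θ} ⊆ {x : ℚ_[p] | ‖x‖ = r} →
      f '' {x : ℚ_[p] | ‖x - c‖ ≤ θ} ⊆ {x : ℚ_[p] | ‖x - c‖ ≤ θ} → ρ ≤ θ) := by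
  subst hα hβ
  have hβ0 : 0 < ‖xh₂‖ := hr0.trans hrβ
  have hM : r ≤ max r ‖xh₁‖ := le_max_left _ _
  have hM0 : 0 < max r ‖xh₁‖ := hr0.trans_le hM
  have hD : ∀ x : ℚ_[p], ‖x‖ = r → ‖x ^ 2 + a * x + b‖ = max r ‖xh₁‖ * ‖xh₂‖ := by
    intro x hx
    rw [norm_denom hsum hprod (hx ▸ hrα) (hx ▸ hrβ), hx]
  have hfg : ∀ x : ℚ_[p], ‖x‖ = r → f x = x - x ^ 3 / (x ^ 2 + a * x + b) := by
    intro x hx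
    have h0 : x ^ 2 + a * x + b ≠ 0 := norm_ne_zero_iff.1 (by rw [hD x hx]; positivity)
    rw [hf, eq_sub_iff_add_eq, ← add_div, div_eq_iff h0]
    ring
  have hg : ∀ x : ℚ_[p], ‖x‖ = r →
      ‖x ^ 3 / (x ^ 2 + a * x + b)‖ = r ^ 3 / (max r ‖xh₁‖ * ‖xh₂‖) := by
    intro x hx
    rw [norm_div, norm_pow, hx, hD x hx]
  have hρ_val : ρ = r ^ 3 / (max r ‖xh₁‖ * ‖xh₂‖) := by
    rw [hρ, hfg c hc, sub_sub_cancel_left, norm_neg, hg c hc]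
  have hρr : ρ < r := by
    rw [hρ_val, div_lt_iff₀ (by positivity)]
    calc r ^ 3 = r * (r * r) := by ring
      _ ≤ r * (max r ‖xh₁‖ * r) := by gcongr
      _ < r * (max r ‖xh₁‖ * ‖xh₂‖) := by gcongr
  have hdisp : ∀ x : ℚ_[p], ‖x‖ = r → ‖f x - x‖ = ρ := by
    intro x hx
    rw [hfg x hx, sub_sub_cancel_left, norm_neg, hg x hx, hρ_val]
  -- A point at distance less than `r` from the sphere lies on the sphere.
  have hnear : ∀ x y : ℚ_[p], ‖x‖ = r → ‖y - x‖ < r → ‖y‖ = r := by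
    intro x y hx hy
    rw [← sub_add_cancel y x, Padic.add_eq_max_of_ne (by rw [hx]; exact hy.ne), hx,
      max_eq_right hy.le]
  have hball : ∀ x : ℚ_[p], ‖x - c‖ ≤ ρ → ‖x‖ = r := fun x hx =>
    hnear c x hc (hx.trans_lt hρr)
  have hiter : ∀ n : ℕ, ‖f^[n] c‖ = r := by
    intro n
    induction n with
    | zero => simpa using hc
    | succ n ih =>
      rw [Function.iterate_succ_apply']
      exact hnear _ _ ih (by rw [hdisp _ ih]; exact hρr)
  refine ⟨fun n => ?_, ?_, fun θ hθ _ hinv => ?_⟩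
  · rw [Function.iterate_succ_apply']
    exact hdisp _ (hiter n)
  · apply Set.Subset.antisymm
    · rintro _ ⟨x, hx, rfl⟩
      have hx' : ‖x - c‖ ≤ ρ := hx
      change ‖f x - c‖ ≤ ρ
      rw [← sub_add_sub_cancel (f x) x c]
      exact (Padic.nonarchimedean _ _).trans (max_le (hdisp x (hball x hx')).le hx')
    · intro y hy
      have hy' : ‖y - c‖ ≤ ρ := hy
      have hcl : IsClosed {x : ℚ_[p] | ‖x - c‖ ≤ ρ} :=
        isClosed_le (by fun_prop) continuous_const
      have hmaps : Set.MapsTo (fun x => y + x ^ 3 / (x ^ 2 + a * x + b))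
          {x : ℚ_[p] | ‖x - c‖ ≤ ρ} {x : ℚ_[p] | ‖x - c‖ ≤ ρ} := by
        intro x hx
        change ‖y + x ^ 3 / (x ^ 2 + a * x + b) - c‖ ≤ ρ
        rw [add_sub_right_comm]
        refine (Padic.nonarchimedean _ _).trans (max_le hy' ?_)
        rw [hg x (hball x hx), hρ_val]
      have hcontr : ContractingWith (Real.toNNReal (r / ‖xh₂‖)) hmaps.restrict := by
        refine ⟨by rw [Real.toNNReal_lt_one]; exact (div_lt_one hβ0).2 hrβ,
          LipschitzWith.of_dist_le_mul ?_⟩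
        rintro ⟨u, hu⟩ ⟨v, hv⟩
        rw [Real.coe_toNNReal _ (by positivity), Subtype.dist_eq, Subtype.dist_eq,
          Set.MapsTo.val_restrict_apply, Set.MapsTo.val_restrict_apply, dist_add_left,
          dist_eq_norm, dist_eq_norm]
        exact norm_g_sub_le hsum hprod hαβ hr0 hrα hrβ (hball u hu) (hball v hv)
      obtain ⟨x, hx, hfix, -⟩ := hcontr.exists_fixedPoint' hcl.isComplete hmaps
        (x := y) hy (edist_ne_top _ _)
      refine ⟨x, hx, ?_⟩
      rw [hfg x (hball x hx), sub_eq_iff_eq_add]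
      exact hfix.symm
  · rw [hρ]
    exact hinv ⟨c, by simpa using hθ.le, rfl⟩
end

section
/- Assume p is odd. Let r ∈ A with r > 0, i.e. 0 < r < β and r ≠ α, let c ∈ ℚ_p with ‖c‖_p = r, set ρ = ‖f(c) − c‖_p, and let B = {x : ‖x − c‖_p ≤ ρ} be the closed ball of radius ρ around c. Let μ be any additive Haar measure on ℚ_p (μ.IsAddHaarMeasure). Then B ⊆ S_r(0), f '' B = B, and 0 < μ(B) < μ(S_r(0)) < ∞. Consequently the restriction of f to the invariant sphere S_r(0) admits an invariant measurable subset of strictly intermediate normalized Haar measure, i.e. the dynamical system (S_r(0), f, normalized Haar measure) is not ergodic. -/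
/-!
Write `u, v` for the two poles, so that `f x = x - g x` with `g x = x³ / ((x - u) (x - v))`.
On the sphere `‖x‖ = r` with `r < ‖v‖` and `r ≠ ‖u‖`, the ultrametric inequality gives
`‖x - v‖ = ‖v‖` and `‖x - u‖ = m` with `m = max r ‖u‖`. Hence the displacement
`‖f x - x‖ = ‖g x‖ = r³ / (m ‖v‖)` is a constant `ρ`, and `0 < ρ < r` (`norm_displacement`).
Consequently `f` maps the ball `B = V_ρ(c) ⊆ S_r(0)` into itself.

It is onto `B` because `g` is a contraction on the sphere with constant `r / ‖v‖ < 1`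
(`displacement_contracts`): for `y ∈ B` the map `x ↦ y + g x` preserves the complete set `B`
and contracts it, so Banach's theorem yields `x ∈ B` with `x - g x = y`.

Since `p` is odd, `‖2‖ = 1`, so `-c` lies at distance `r > ρ` from `c`, and the balls of
radius `ρ` around `c` and `-c` are disjoint subsets of the sphere, both of positive measure.
-/

open MeasureTheory

section Ultrametric

variable {p : ℕ} [Fact p.Prime]

/-- The displacement `x - f x` of the map, with `u` and `v` the roots of the denominator. -/
noncomputable def displacement (u v x : ℚ_[p]) : ℚ_[p] := x ^ 3 / ((x - u) * (x - v))

lemma norm_sub_eq_max_of_ne {x z : ℚ_[p]} (h : ‖x‖ ≠ ‖z‖) : ‖x - z‖ = max ‖x‖ ‖z‖ := by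
  rw [sub_eq_add_neg, IsUltrametricDist.norm_add_eq_max_of_norm_ne_norm (by simpa using h),
    norm_neg]

lemma norm_eq_of_norm_sub_lt {x c : ℚ_[p]} {r : ℝ} (hc : ‖c‖ = r) (h : ‖x - c‖ < r) :
    ‖x‖ = r := by
  have := IsUltrametricDist.norm_add_eq_max_of_norm_ne_norm (x := x - c) (y := c)
    (by rw [hc]; exact h.ne)
  rwa [sub_add_cancel, hc, max_eq_right h.le] at this

lemma norm_displacement {u v x : ℚ_[p]} {r : ℝ} (hv : r < ‖v‖) (hu : r ≠ ‖u‖) (hx : ‖x‖ = r) :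
    ‖displacement u v x‖ = r ^ 3 / (max r ‖u‖ * ‖v‖) := by
  subst hx
  rw [displacement, norm_div, norm_mul, norm_pow, norm_sub_eq_max_of_ne hu,
    norm_sub_eq_max_of_ne hv.ne, max_eq_right hv.le]

lemma displacement_radius_lt {r m β : ℝ} (hr : 0 < r) (hm : r ≤ m) (hβ : r < β) :
    r ^ 3 / (m * β) < r := by
  have hm0 : 0 < m := hr.trans_le hm
  rw [div_lt_iff₀ (mul_pos hm0 (hr.trans hβ))]
  have : r * r < m * β := mul_lt_mul' hm hβ hr.le hm0
  nlinarith

/-- On the sphere of radius `r`, the displacement contracts distances by `r / ‖v‖`: the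
difference of two values is `(x - y)` times a symmetric polynomial of norm at most
`m² r ‖v‖`, over a denominator of norm `m² ‖v‖²`, where `m = max r ‖u‖`. -/
lemma displacement_contracts {u v x y : ℚ_[p]} {r : ℝ} (hr : 0 < r) (hv : r < ‖v‖)
    (huv : ‖u‖ ≤ ‖v‖) (hu : r ≠ ‖u‖) (hx : ‖x‖ = r) (hy : ‖y‖ = r) :
    ‖displacement u v x - displacement u v y‖ ≤ r / ‖v‖ * ‖x - y‖ := by
  have hv0 : 0 < ‖v‖ := hr.trans hv
  obtain ⟨m, hm⟩ : ∃ m, m = max r ‖u‖ := ⟨_, rfl⟩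
  have hrm : r ≤ m := hm ▸ le_max_left _ _
  have hum : ‖u‖ ≤ m := hm ▸ le_max_right _ _
  have hm0 : 0 < m := hr.trans_le hrm
  have hxu : ‖x - u‖ = m := by rw [norm_sub_eq_max_of_ne (by rwa [hx]), hx, hm]
  have hyu : ‖y - u‖ = m := by rw [norm_sub_eq_max_of_ne (by rwa [hy]), hy, hm]
  have hxv : ‖x - v‖ = ‖v‖ := by
    rw [norm_sub_eq_max_of_ne (by rw [hx]; exact hv.ne), hx, max_eq_right hv.le]
  have hyv : ‖y - v‖ = ‖v‖ := by
    rw [norm_sub_eq_max_of_ne (by rw [hy]; exact hv.ne), hy, max_eq_right hv.le]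
  have h1 : x - u ≠ 0 := norm_pos_iff.1 (by rwa [hxu])
  have h2 : y - u ≠ 0 := norm_pos_iff.1 (by rwa [hyu])
  have h3 : x - v ≠ 0 := norm_pos_iff.1 (by rwa [hxv])
  have h4 : y - v ≠ 0 := norm_pos_iff.1 (by rwa [hyv])
  have key : displacement u v x - displacement u v y =
      (x - y) * (x ^ 2 * y ^ 2 + -((u + v) * (x * y) * (x + y))
        + u * v * (x ^ 2 + x * y + y ^ 2)) /
        (((x - u) * (x - v)) * ((y - u) * (y - v))) := by
    unfold displacement
    rw [div_sub_div _ _ (mul_ne_zero h1 h3) (mul_ne_zero h2 h4)]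
    congr 1
    ring
  have huv' : ‖u + v‖ ≤ ‖v‖ := (IsUltrametricDist.norm_add_le_max u v).trans (max_le huv le_rfl)
  have hxy : ‖x + y‖ ≤ r :=
    (IsUltrametricDist.norm_add_le_max x y).trans (max_le hx.le hy.le)
  have hq : ‖x ^ 2 + x * y + y ^ 2‖ ≤ r ^ 2 := by
    refine (IsUltrametricDist.norm_add_le_max _ _).trans (max_le
      ((IsUltrametricDist.norm_add_le_max _ _).trans (max_le ?_ ?_)) ?_)
    · rw [norm_pow, hx]
    · rw [norm_mul, hx, hy, sq]
    · rw [norm_pow, hy]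
  have hr2 : r * r ≤ m * m := mul_le_mul hrm hrm hr.le hm0.le
  have hbr : ‖x ^ 2 * y ^ 2 + -((u + v) * (x * y) * (x + y))
        + u * v * (x ^ 2 + x * y + y ^ 2)‖ ≤ (m * m) * (r * ‖v‖) := by
    refine (IsUltrametricDist.norm_add_le_max _ _).trans (max_le
      ((IsUltrametricDist.norm_add_le_max _ _).trans (max_le ?_ ?_)) ?_)
    · rw [norm_mul, norm_pow, norm_pow, hx, hy]
      calc r ^ 2 * r ^ 2 = (r * r) * (r * r) := by ring
        _ ≤ (m * m) * (r * ‖v‖) := by gcongr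
    · rw [norm_neg, norm_mul, norm_mul, norm_mul, hx, hy]
      calc ‖u + v‖ * (r * r) * ‖x + y‖ ≤ ‖v‖ * (m * m) * r := by gcongr
        _ = _ := by ring
    · rw [norm_mul, norm_mul]
      calc ‖u‖ * ‖v‖ * ‖x ^ 2 + x * y + y ^ 2‖ ≤ ‖u‖ * ‖v‖ * r ^ 2 := by gcongr
        _ = (‖u‖ * r) * (r * ‖v‖) := by ring
        _ ≤ (m * m) * (r * ‖v‖) := by gcongr
  rw [key, norm_div, norm_mul, norm_mul, norm_mul, norm_mul, hxu, hyu, hxv, hyv,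
    div_le_iff₀ (by positivity)]
  calc ‖x - y‖ * _ ≤ ‖x - y‖ * ((m * m) * (r * ‖v‖)) := by gcongr
    _ = r / ‖v‖ * ‖x - y‖ * (m * ‖v‖ * (m * ‖v‖)) := by field_simp

end Ultrametric

/-- Theorem 12: for odd `p`, on each invariant sphere `S_r(0)`
(`r ∈ A`, `r > 0`) the closed ball `B = V_ρ(c)` with `ρ = ‖f(c) − c‖` is contained in
`S_r(0)`, is invariant under `f`, and has strictly intermediate Haar measure:
`0 < μ(B) < μ(S_r(0)) < ∞`. Hence `(S_r(0), f, μ)` is not ergodic. -/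
theorem stmt_19 (p : ℕ) [Fact p.Prime] (hp : p ≠ 2) (a b : ℚ_[p]) (hb : b ≠ 0)
    (f : ℚ_[p] → ℚ_[p])
    (hf : ∀ x : ℚ_[p], f x = (a * x ^ 2 + b * x) / (x ^ 2 + a * x + b))
    (xh₁ xh₂ : ℚ_[p]) (hsum : xh₁ + xh₂ = -a) (hprod : xh₁ * xh₂ = b)
    (α β : ℝ) (hα : α = ‖xh₁‖) (hβ : β = ‖xh₂‖) (hαβ : α ≤ β)
    (r : ℝ) (hr0 : 0 < r) (hrβ : r < β) (hrα : r ≠ α)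
    (c : ℚ_[p]) (hc : ‖c‖ = r)
    (ρ : ℝ) (hρ : ρ = ‖f c - c‖)
    (B S : Set ℚ_[p]) (hB : B = {x : ℚ_[p] | ‖x - c‖ ≤ ρ})
    (hS : S = {x : ℚ_[p] | ‖x‖ = r})
    [MeasurableSpace ℚ_[p]] [BorelSpace ℚ_[p]]
    (μ : Measure ℚ_[p]) [μ.IsAddHaarMeasure] :
    B ⊆ S ∧ f '' B = B ∧ 0 < μ B ∧ μ B < μ S ∧ μ S < ⊤ := by
  obtain ⟨u, rfl⟩ : ∃ u, u = xh₁ := ⟨_, rfl⟩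
  obtain ⟨v, rfl⟩ : ∃ v, v = xh₂ := ⟨_, rfl⟩
  rw [hα] at hαβ hrα
  rw [hβ] at hαβ hrβ
  have hden : ∀ x : ℚ_[p], x ^ 2 + a * x + b = (x - u) * (x - v) := fun x => by
    linear_combination x * hsum - hprod
  have hfg : ∀ x : ℚ_[p], ‖x‖ = r → f x = x - displacement u v x := by
    intro x hx
    have h1 : x - u ≠ 0 := sub_ne_zero.2 fun h => hrα (by rw [← hx, h])
    have h3 : x - v ≠ 0 := sub_ne_zero.2 fun h => hrβ.ne (by rw [← hx, h])
    rw [hf, hden, displacement, eq_sub_iff_add_eq, ← add_div,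
      div_eq_iff (mul_ne_zero h1 h3), ← hden]
    ring
  have hdisp : ∀ x : ℚ_[p], ‖x‖ = r → ‖displacement u v x‖ = ρ := by
    intro x hx
    rw [hρ, hfg c hc, sub_sub_cancel_left, norm_neg, norm_displacement hrβ hrα hx,
      norm_displacement hrβ hrα hc]
  have hρ' : ρ = r ^ 3 / (max r ‖u‖ * ‖v‖) := by
    rw [← hdisp c hc, norm_displacement hrβ hrα hc]
  have hρr : ρ < r := hρ' ▸ displacement_radius_lt hr0 (le_max_left _ _) hrβ
  have hv0 : 0 < ‖v‖ := hr0.trans hrβ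
  have hρ0 : 0 < ρ := by
    have : 0 < max r ‖u‖ := lt_max_of_lt_left hr0
    rw [hρ']
    positivity
  have hBcl : B = Metric.closedBall c ρ := by
    rw [hB]; ext x; simp [dist_eq_norm]
  have hball : ∀ d : ℚ_[p], ‖d‖ = r → Metric.closedBall d ρ ⊆ S := by
    intro d hd x hx
    rw [mem_closedBall_iff_norm] at hx
    rw [hS]
    exact norm_eq_of_norm_sub_lt hd (hx.trans_lt hρr)
  have hBS : B ⊆ S := hBcl ▸ hball c hc
  have hBn : ∀ x ∈ B, ‖x‖ = r := fun x hx => by simpa [hS] using hBS hx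
  have hshift : ∀ x ∈ B, ∀ z : ℚ_[p], ‖z‖ ≤ ρ → x + z ∈ B := by
    intro x hx z hz
    rw [hB] at hx ⊢
    change ‖x + z - c‖ ≤ ρ
    rw [add_sub_right_comm]
    exact (IsUltrametricDist.norm_add_le_max _ _).trans (max_le hx hz)
  have himg : f '' B = B := by
    refine Set.Subset.antisymm ?_ fun y hy => ?_
    · rintro _ ⟨x, hx, rfl⟩
      rw [hfg x (hBn x hx), sub_eq_add_neg]
      exact hshift x hx _ (by rw [norm_neg, hdisp x (hBn x hx)])
    · -- A preimage of `y` is a fixed point of the contraction `x ↦ y + g x` of `B`.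
      have hmaps : Set.MapsTo (fun x => y + displacement u v x) B B := fun x hx =>
        hshift y hy _ (hdisp x (hBn x hx)).le
      have hcontr : ContractingWith (Real.toNNReal (r / ‖v‖)) (hmaps.restrict _ B B) := by
        refine ⟨by rw [Real.toNNReal_lt_one]; exact (div_lt_one hv0).2 hrβ,
          LipschitzWith.of_dist_le_mul fun x z => ?_⟩
        rw [Real.coe_toNNReal _ (by positivity), Subtype.dist_eq, Subtype.dist_eq,
          Set.MapsTo.val_restrict_apply, Set.MapsTo.val_restrict_apply, dist_add_left,
          dist_eq_norm, dist_eq_norm]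
        exact displacement_contracts hr0 hrβ hαβ hrα (hBn _ x.2) (hBn _ z.2)
      have hcomplete : IsComplete B := hBcl ▸ Metric.isClosed_closedBall.isComplete
      obtain ⟨x, hx, hfix, -⟩ := hcontr.exists_fixedPoint' hcomplete hmaps hy (edist_ne_top _ _)
      refine ⟨x, hx, ?_⟩
      rw [hfg x (hBn x hx), sub_eq_iff_eq_add]
      exact hfix.symm
  have hpos : ∀ d : ℚ_[p], 0 < μ (Metric.closedBall d ρ) := fun d =>
    Metric.measure_closedBall_pos μ d hρ0
  have hStop : μ S < ⊤ := by
    refine (measure_mono fun x hx => ?_).trans_lt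
      (measure_closedBall_lt_top (μ := μ) (x := (0 : ℚ_[p])) (r := r))
    rw [hS] at hx
    rw [mem_closedBall_zero_iff]
    exact le_of_eq hx
  have hdisj : Disjoint B (Metric.closedBall (-c) ρ) := by
    rw [hBcl, Set.disjoint_left]
    intro x hx hx'
    rw [mem_closedBall_iff_norm] at hx hx'
    have h2 : ‖(2 : ℚ_[p])‖ = 1 := by
      have := (Padic.norm_natCast_eq_one_iff (p := p) (n := 2)).2
        ((Nat.coprime_primes Fact.out Nat.prime_two).2 hp)
      exact_mod_cast this
    have h : ‖(2 : ℚ_[p]) * c‖ ≤ ρ := by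
      rw [show 2 * c = (x - -c) + -(x - c) by ring]
      exact (IsUltrametricDist.norm_add_le_max _ _).trans (max_le hx' (by rwa [norm_neg]))
    rw [norm_mul, h2, one_mul, hc] at h
    exact hρr.not_ge h
  refine ⟨hBS, himg, hBcl ▸ hpos c, ?_, hStop⟩
  calc μ B < μ B + μ (Metric.closedBall (-c) ρ) :=
        ENNReal.lt_add_right ((measure_mono hBS).trans_lt hStop).ne (hpos (-c)).ne'
    _ = μ (B ∪ Metric.closedBall (-c) ρ) :=
        (measure_union hdisj Metric.isClosed_closedBall.measurableSet).symm
    _ ≤ μ S := measure_mono (Set.union_subset hBS (hball (-c) (by rwa [norm_neg])))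
end
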